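/- Let a > 0 and b ≥ 0 be constants and let f : ℝ → ℝ be continuous with f(s) > 0 for s > 0 and lim_{s→+∞} f(s)/s = 0. Then for every λ₀ > 0 there is no sequence (λₙ, uₙ) where each uₙ is a positive solution of u''''(x) − (a + b∫₀¹(u'(t))²dt)·u''(x) = λₙ·f(u(x)) with u(0) = u(1) = u''(0) = u''(1) = 0, such that λₙ → λ₀ and ‖uₙ‖∞ → +∞. Equivalently, for each compact interval of positive λ-values, the supremum norms of all positive solutions with λ in that interval are bounded. -/

import Mathlib

/-!
The bound is an a priori estimate by two applications of the maximum principle. Put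
`M = ‖u‖∞` and `z = u''`, so that `z'' - K z = λ f(u)` with `K ≥ a > 0` and `z(0) = z(1) = 0`.
At an interior minimum of `z` one has `z'' ≥ 0`, hence `z ≥ -B / a` on `[0,1]` whenever
`λ f(u) ≤ B` (`second_deriv_lower_bound`). Comparing `u` with the parabola `W x (1 - x) / 2`,
`W = B / a`, gives `u ≤ W / 8` (`le_of_second_deriv_ge`). Sublinearity of `f` at infinity gives
`f(s) ≤ ε s + C` for `s ≥ 0` (`exists_affine_bound`), so for `λ ≤ r` one may take
`B = r (ε M + C)` and obtain `M ≤ r (ε M + C) / (8 a)`; with `ε = 4 a / r` the term in `M` on the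
right is `M / 2` and is absorbed. The sequential statement follows because a convergent sequence
`λₙ → λ₀ > 0` eventually lies in `[λ₀/2, 2λ₀]`.
-/

open Set MeasureTheory intervalIntegral Real Filter Topology

/-- The `n`-th derivative of `u` on the interval `[0,1]` (one-sided at the endpoints). -/
noncomputable def D (n : ℕ) (u : ℝ → ℝ) : ℝ → ℝ :=
  iteratedDerivWithin n u (Set.Icc 0 1)

/-- The supremum norm `‖u‖∞ = sup_{x ∈ [0,1]} |u x|`. -/
noncomputable def normInf (u : ℝ → ℝ) : ℝ :=
  ⨆ x : Set.Icc (0:ℝ) 1, |u x|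

/-- The hinged boundary conditions `u(0) = u(1) = u''(0) = u''(1) = 0`. -/
def BC (u : ℝ → ℝ) : Prop :=
  u 0 = 0 ∧ u 1 = 0 ∧ D 2 u 0 = 0 ∧ D 2 u 1 = 0

/-- The Kirchhoff nonlocal coefficient `a + b ∫₀¹ (u'(t))² dt`. -/
noncomputable def KCoef (a b : ℝ) (u : ℝ → ℝ) : ℝ :=
  a + b * ∫ t in (0:ℝ)..1, (D 1 u t) ^ 2

lemma hasDerivWithinAt_D {u : ℝ → ℝ} (hu : ContDiffOn ℝ 4 u (Icc 0 1)) {k : ℕ} (hk : k < 4)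
    {x : ℝ} (hx : x ∈ Icc (0:ℝ) 1) :
    HasDerivWithinAt (D k u) (D (k + 1) u x) (Icc 0 1) x := by
  have h := hu.differentiableOn_iteratedDerivWithin (m := k) (by exact_mod_cast hk)
    (uniqueDiffOn_Icc one_pos)
  have h2 := (h x hx).hasDerivWithinAt
  rwa [← iteratedDerivWithin_succ] at h2

lemma hasDerivAt_D {u : ℝ → ℝ} (hu : ContDiffOn ℝ 4 u (Icc 0 1)) {k : ℕ} (hk : k < 4)
    {x : ℝ} (hx : x ∈ Ioo (0:ℝ) 1) : HasDerivAt (D k u) (D (k + 1) u x) x :=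
  (hasDerivWithinAt_D hu hk (Ioo_subset_Icc_self hx)).hasDerivAt (Icc_mem_nhds hx.1 hx.2)

lemma D_zero (u : ℝ → ℝ) : D 0 u = u := by
  unfold D
  exact iteratedDerivWithin_zero

/-- The second-order necessary condition at a local minimum. -/
lemma deriv_deriv_nonneg_of_isLocalMin {z : ℝ → ℝ} {x : ℝ} (h : IsLocalMin z x)
    (hc : ContinuousAt z x) : 0 ≤ deriv (deriv z) x := by
  by_contra! hneg
  have hmax := isLocalMax_of_deriv_deriv_neg hneg h.deriv_eq_zero hc
  -- A point that is both a local minimum and a local maximum has a neighbourhood where `z` is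
  -- constant, so the second derivative vanishes there.
  have heq : z =ᶠ[𝓝 x] fun _ => z x := by
    filter_upwards [h, hmax] with y h1 h2 using le_antisymm h2 h1
  have h0 : deriv (deriv z) x = 0 := by
    rw [heq.deriv.deriv_eq]
    simp
  linarith

lemma second_deriv_lower_bound {u : ℝ → ℝ} (hu : ContDiffOn ℝ 4 u (Icc 0 1)) {a K B : ℝ}
    (ha : 0 < a) (hK : a ≤ K) (hB : 0 ≤ B)
    (hle : ∀ x ∈ Ioo (0:ℝ) 1, D 4 u x - K * D 2 u x ≤ B)
    (h0 : D 2 u 0 = 0) (h1 : D 2 u 1 = 0) {x : ℝ} (hx : x ∈ Icc (0:ℝ) 1) :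
    -(B / a) ≤ D 2 u x := by
  have hcont : ContinuousOn (D 2 u) (Icc 0 1) := fun y hy =>
    (hasDerivWithinAt_D hu (by norm_num) hy).continuousWithinAt
  obtain ⟨c, hc, hmin⟩ := isCompact_Icc.exists_isMinOn ⟨x, hx⟩ hcont
  refine le_trans ?_ (hmin hx)
  have hBa : 0 ≤ B / a := div_nonneg hB ha.le
  rcases eq_or_lt_of_le hc.1 with rfl | hc0
  · linarith
  rcases eq_or_lt_of_le hc.2 with rfl | hc1
  · linarith
  have hco : c ∈ Ioo (0:ℝ) 1 := ⟨hc0, hc1⟩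
  have hloc : IsLocalMin (D 2 u) c := hmin.isLocalMin (Icc_mem_nhds hc0 hc1)
  have hnn := deriv_deriv_nonneg_of_isLocalMin hloc
    (hasDerivAt_D hu (by norm_num) hco).continuousAt
  have hd : deriv (D 2 u) =ᶠ[𝓝 c] D 3 u := by
    filter_upwards [Ioo_mem_nhds hc0 hc1] with y hy
    exact (hasDerivAt_D hu (by norm_num) hy).deriv
  rw [hd.deriv_eq, (hasDerivAt_D hu (k := 3) (by norm_num) hco).deriv] at hnn
  have h4 := hle c hco
  norm_num at hnn
  by_contra! hlt
  have hz : D 2 u c < 0 := by linarith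
  have h5 : K * D 2 u c ≤ a * D 2 u c := mul_le_mul_of_nonpos_right hK hz.le
  have h6 : a * D 2 u c < a * -(B / a) := mul_lt_mul_of_pos_left hlt ha
  have h7 : a * -(B / a) = -B := by field_simp
  linarith

lemma le_of_second_deriv_ge {u : ℝ → ℝ} (hu : ContDiffOn ℝ 4 u (Icc 0 1)) {W : ℝ} (hW : 0 ≤ W)
    (h2 : ∀ x ∈ Icc (0:ℝ) 1, -W ≤ D 2 u x) (h0 : u 0 = 0) (h1 : u 1 = 0)
    {x : ℝ} (hx : x ∈ Icc (0:ℝ) 1) : u x ≤ W / 8 := by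
  have hconv : ConvexOn ℝ (Icc (0:ℝ) 1) (fun x => u x - W * (x - x ^ 2) / 2) := by
    apply convexOn_of_hasDerivWithinAt2_nonneg (convex_Icc 0 1)
      (f' := fun x => D 1 u x - W * (1 - 2 * x) / 2) (f'' := fun x => D 2 u x + W)
    · exact hu.continuousOn.sub (by fun_prop)
    · intro y hy
      rw [interior_Icc] at hy
      have h := hasDerivAt_D hu (k := 0) (by norm_num) hy
      rw [D_zero] at h
      have hq := ((((hasDerivAt_id y).sub (hasDerivAt_pow 2 y)).const_mul W).div_const 2)
      refine ((h.sub hq).congr_deriv ?_).hasDerivWithinAt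
      norm_num
    · intro y hy
      rw [interior_Icc] at hy
      have h := hasDerivAt_D hu (k := 1) (by norm_num) hy
      have hq := (((((hasDerivAt_id y).const_mul 2).const_sub 1).const_mul W).div_const 2)
      refine ((h.sub hq).congr_deriv ?_).hasDerivWithinAt
      norm_num
      ring
    · intro y hy
      have := h2 y (interior_subset hy)
      linarith
  have h := hconv.le_max_of_mem_Icc (left_mem_Icc.2 zero_le_one) (right_mem_Icc.2 zero_le_one) hx
  norm_num [h0, h1] at h
  nlinarith [sq_nonneg (2 * x - 1), mul_nonneg hW (sq_nonneg (2 * x - 1))]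

lemma exists_affine_bound {f : ℝ → ℝ} (hf : Continuous f)
    (hfi : Tendsto (fun s => f s / s) atTop (𝓝 0)) {ε : ℝ} (hε : 0 < ε) :
    ∃ C : ℝ, 0 ≤ C ∧ ∀ s : ℝ, 0 ≤ s → f s ≤ ε * s + C := by
  obtain ⟨S, hS⟩ := eventually_atTop.1 ((hfi.eventually_lt_const hε).and (eventually_gt_atTop 0))
  obtain ⟨C, hC⟩ := (isCompact_Icc (a := (0:ℝ)) (b := S)).bddAbove_image hf.continuousOn
  refine ⟨max C 0, le_max_right _ _, fun s hs => ?_⟩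
  rcases le_total s S with h | h
  · have h1 : f s ≤ C := hC (mem_image_of_mem f ⟨hs, h⟩)
    have h2 := le_max_left C 0
    have h3 : 0 ≤ ε * s := by positivity
    linarith
  · obtain ⟨h1, h2⟩ := hS s h
    rw [div_lt_iff₀ h2] at h1
    have h3 := le_max_right C 0
    linarith

lemma le_KCoef (a : ℝ) {b : ℝ} (hb : 0 ≤ b) (u : ℝ → ℝ) : a ≤ KCoef a b u := by
  have h : 0 ≤ ∫ t in (0:ℝ)..1, (D 1 u t) ^ 2 :=
    intervalIntegral.integral_nonneg zero_le_one fun t _ => sq_nonneg _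
  have := mul_nonneg hb h
  unfold KCoef
  linarith

/-- The uniform a priori bound for positive solutions with `λ ∈ [l, r]`, `l > 0`. -/
lemma exists_normInf_bound {a b : ℝ} (ha : 0 < a) (hb : 0 ≤ b)
    {f : ℝ → ℝ} (hf : Continuous f)
    (hfi : Tendsto (fun s => f s / s) atTop (𝓝 0)) {l r : ℝ} (hl : 0 < l) (hlr : l ≤ r) :
    ∃ M : ℝ, ∀ lam ∈ Icc l r, ∀ u : ℝ → ℝ, ContDiffOn ℝ 4 u (Icc 0 1) →
      (∀ x ∈ Ioo (0:ℝ) 1, D 4 u x - KCoef a b u * D 2 u x = lam * f (u x)) → BC u →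
      (∀ x ∈ Ioo (0:ℝ) 1, 0 < u x) → normInf u ≤ M := by
  have hr : 0 < r := hl.trans_le hlr
  obtain ⟨C, hC0, hC⟩ := exists_affine_bound hf hfi (ε := 4 * a / r) (by positivity)
  refine ⟨r * C / (4 * a), fun lam hlam u hu heq ⟨hu0, hu1, hz0, hz1⟩ hpos => ?_⟩
  have hnn : ∀ x ∈ Icc (0:ℝ) 1, 0 ≤ u x := by
    intro x hx
    rcases eq_or_lt_of_le hx.1 with rfl | h0
    · exact hu0.ge
    rcases eq_or_lt_of_le hx.2 with rfl | h1
    · exact hu1.ge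
    exact (hpos x ⟨h0, h1⟩).le
  have hbdd : BddAbove (range fun x : Icc (0:ℝ) 1 => |u x|) := by
    have h := (isCompact_Icc (a := (0:ℝ)) (b := 1)).bddAbove_image hu.continuousOn.abs
    rwa [image_eq_range] at h
  have hle : ∀ x ∈ Icc (0:ℝ) 1, u x ≤ normInf u := fun x hx =>
    (le_abs_self _).trans (le_ciSup hbdd ⟨x, hx⟩)
  have hM : 0 ≤ normInf u := hu0 ▸ hle 0 (left_mem_Icc.2 zero_le_one)
  set M := normInf u with hMdef
  have hB : 0 ≤ r * (4 * a / r * M + C) := by positivity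
  have hsrc : ∀ x ∈ Ioo (0:ℝ) 1,
      D 4 u x - KCoef a b u * D 2 u x ≤ r * (4 * a / r * M + C) := by
    intro x hx
    have hx' := Ioo_subset_Icc_self hx
    rw [heq x hx]
    have h1 : f (u x) ≤ 4 * a / r * M + C :=
      (hC _ (hnn x hx')).trans (by gcongr; exact hle x hx')
    have hlam0 : 0 ≤ lam := hl.le.trans hlam.1
    calc lam * f (u x) ≤ lam * (4 * a / r * M + C) := by gcongr
      _ ≤ r * (4 * a / r * M + C) := by
        have := hlam.2
        gcongr
  have hlow := fun x hx => second_deriv_lower_bound hu ha (le_KCoef a hb u) hB hsrc hz0 hz1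
    (x := x) hx
  have hup : ∀ x ∈ Icc (0:ℝ) 1, u x ≤ r * (4 * a / r * M + C) / a / 8 := fun x hx =>
    le_of_second_deriv_ge hu (by positivity) hlow hu0 hu1 hx
  have hMle : M ≤ r * (4 * a / r * M + C) / a / 8 := by
    have : Nonempty (Icc (0:ℝ) 1) := ⟨⟨0, left_mem_Icc.2 zero_le_one⟩⟩
    refine ciSup_le fun x => ?_
    rw [abs_of_nonneg (hnn x x.2)]
    exact hup x x.2
  have hsplit : r * (4 * a / r * M + C) / a / 8 = M / 2 + r * C / (4 * a) / 2 := by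
    field_simp
    ring
  linarith

/-- Under (H2), positive solutions cannot blow up at a finite `λ₀ > 0`:
no sequence of positive solutions `(λₙ, uₙ)` has `λₙ → λ₀` and `‖uₙ‖∞ → ∞`. Equivalently,
on each compact interval of positive `λ`, the sup norms of positive solutions are bounded. -/
theorem stmt14 (a b : ℝ) (ha : 0 < a) (hb : 0 ≤ b)
    (f : ℝ → ℝ) (hf : Continuous f) (hfp : ∀ s : ℝ, 0 < s → 0 < f s)
    (hfi : Tendsto (fun s => f s / s) atTop (𝓝 0)) :
    (∀ lam0 : ℝ, 0 < lam0 →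
      ¬ ∃ (lam : ℕ → ℝ) (u : ℕ → ℝ → ℝ),
        (∀ n : ℕ, ContDiffOn ℝ 4 (u n) (Set.Icc 0 1) ∧
          (∀ x ∈ Set.Ioo (0:ℝ) 1,
            D 4 (u n) x - KCoef a b (u n) * D 2 (u n) x = lam n * f (u n x)) ∧
          BC (u n) ∧ (∀ x ∈ Set.Ioo (0:ℝ) 1, 0 < u n x)) ∧
        Tendsto lam atTop (𝓝 lam0) ∧
        Tendsto (fun n => normInf (u n)) atTop atTop) ∧
    (∀ l r : ℝ, 0 < l → l ≤ r → ∃ M : ℝ,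
      ∀ lam ∈ Set.Icc l r, ∀ u : ℝ → ℝ, ContDiffOn ℝ 4 u (Set.Icc 0 1) →
        (∀ x ∈ Set.Ioo (0:ℝ) 1,
          D 4 u x - KCoef a b u * D 2 u x = lam * f (u x)) → BC u →
        (∀ x ∈ Set.Ioo (0:ℝ) 1, 0 < u x) → normInf u ≤ M) := by
  refine ⟨?_, fun l r hl hlr => exists_normInf_bound ha hb hf hfi hl hlr⟩
  rintro lam0 h0 ⟨lam, u, hsol, hlam, hnorm⟩
  obtain ⟨M, hM⟩ := exists_normInf_bound ha hb hf hfi (l := lam0 / 2) (r := 2 * lam0)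
    (by linarith) (by linarith)
  have hev : ∀ᶠ n in atTop, lam n ∈ Icc (lam0 / 2) (2 * lam0) :=
    hlam.eventually (Icc_mem_nhds (by linarith) (by linarith))
  obtain ⟨n, hn, hgt⟩ := (hev.and (hnorm.eventually_gt_atTop M)).exists
  obtain ⟨hu, heq, hbc, hpos⟩ := hsol n
  exact absurd (hM (lam n) hn (u n) hu heq hbc hpos) (not_le.2 hgt)
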